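/- For every integer k ≥ 2: ρ_opt(C_{3k−1}□P_2) ≤ ρ_opt(P_{3k−2}□P_2) ≤ 2k, ρ_opt(C_{3k}□P_2) ≤ ρ_opt(P_{3k−1}□P_2) ≤ 2k, and ρ_opt(C_{3k+1}□P_2) ≤ ρ_opt(P_{3k}□P_2) ≤ 2k+1. -/

import Mathlib

open SimpleGraph

/-- A single rubbling move on `G`: either a pebbling move (remove two pebbles at `v`,
add one at an adjacent vertex `u`) or a strict rubbling move (remove one pebble each at
distinct `v` and `w`, both adjacent to `u`, and add one pebble at `u`). -/
def RubblingStep {V : Type*} [DecidableEq V] (G : SimpleGraph V) (p q : V → ℕ) : Prop :=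
  (∃ v u, G.Adj v u ∧ 2 ≤ p v ∧
      q = fun x => if x = v then p x - 2 else if x = u then p x + 1 else p x) ∨
  (∃ v w u, v ≠ w ∧ G.Adj v u ∧ G.Adj w u ∧ 1 ≤ p v ∧ 1 ≤ p w ∧
      q = fun x => if x = v then p x - 1 else if x = w then p x - 1
          else if x = u then p x + 1 else p x)

/-- `q` is obtainable from `p` by an executable rubbling sequence. -/
def RubblingReach {V : Type*} [DecidableEq V] (G : SimpleGraph V) : (V → ℕ) → (V → ℕ) → Prop :=
  Relation.ReflTransGen (RubblingStep G)

/-- The vertex `u` is `k`-reachable from the distribution `p`. -/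
def KReachable {V : Type*} [DecidableEq V] (G : SimpleGraph V) (p : V → ℕ) (u : V) (k : ℕ) : Prop :=
  ∃ q, RubblingReach G p q ∧ k ≤ q u

/-- `p` is solvable: every vertex is reachable. -/
def Solvable {V : Type*} [DecidableEq V] (G : SimpleGraph V) (p : V → ℕ) : Prop :=
  ∀ u, KReachable G p u 1

/-- The optimal rubbling number: the minimum size of a solvable distribution. -/
noncomputable def optRub {V : Type*} [DecidableEq V] [Fintype V] (G : SimpleGraph V) : ℕ :=
  sInf {m | ∃ p : V → ℕ, Solvable G p ∧ ∑ v, p v = m}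

/-- The ladder `P_n □ P_2`. -/
def ladder (n : ℕ) : SimpleGraph (Fin n × Fin 2) :=
  pathGraph n □ pathGraph 2

/-- The `n`-prism `C_n □ P_2`. -/
def prism (n : ℕ) : SimpleGraph (Fin n × Fin 2) :=
  cycleGraph n □ pathGraph 2

/-!
Distributions can be transported along graph homomorphisms and added. Solvable distributions on two
ladders therefore glue to one on the longer ladder with an empty column in between, because a vertex
of the empty column has a neighbour on each side; with two empty columns they close up to one on a
prism. Starting from 2-dominating sets of ladders with at most three columns, this yields all the
numerical bounds.

A solvable distribution on the ladder with `n` columns also solves the prism with `n + 1` columns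
if the two ends of each row can be reached simultaneously, since a vertex of the new column is
adjacent to both ends of its row. If they cannot, then the sets of columns from which the two ends
are reached overlap. This forces at least `n - 1` pebbles, and for `n ≠ 4` the numerical bound for
the prism is no larger. For `n = 4` that bound is four, and the ladder does need four pebbles.
-/

section Moves

variable {V : Type*} [DecidableEq V] {G : SimpleGraph V} {p p' q q' r : V → ℕ} {u v w : V}

theorem rubblingStep_iff : RubblingStep G p q ↔ ∃ (r : V → ℕ) (v w u : V),
    G.Adj v u ∧ G.Adj w u ∧ p = r + Pi.single v 1 + Pi.single w 1 ∧ q = r + Pi.single u 1 := by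
  constructor
  · rintro (⟨v, u, hvu, hv, rfl⟩ | ⟨v, w, u, hvw, hvu, hwu, hv, hw, rfl⟩)
    · refine ⟨fun x => if x = v then p x - 2 else p x, v, v, u, hvu, hvu, ?_, ?_⟩ <;> ext x <;>
        have := hvu.ne <;> simp only [Pi.add_apply, Pi.single_apply] <;> grind
    · refine ⟨fun x => if x = v ∨ x = w then p x - 1 else p x, v, w, u, hvu, hwu, ?_, ?_⟩ <;>
        ext x <;> have := hvu.ne <;> have := hwu.ne <;>
        simp only [Pi.add_apply, Pi.single_apply] <;> grind
  · rintro ⟨r, v, w, u, hvu, hwu, rfl, rfl⟩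
    have := hvu.ne
    have := hwu.ne
    by_cases hvw : v = w
    · subst hvw
      refine Or.inl ⟨v, u, hvu, by simp [add_assoc], ?_⟩
      ext x
      simp only [Pi.add_apply, Pi.single_apply]
      grind
    · refine Or.inr ⟨v, w, u, hvw, hvu, hwu, ?_, by simp, ?_⟩
      · simp only [Pi.add_apply, Pi.single_eq_same]
        lia
      ext x
      simp only [Pi.add_apply, Pi.single_apply]
      grind

theorem rubblingStep_of_adj (r : V → ℕ) (hv : G.Adj v u) (hw : G.Adj w u) :
    RubblingStep G (r + Pi.single v 1 + Pi.single w 1) (r + Pi.single u 1) :=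
  rubblingStep_iff.2 ⟨r, v, w, u, hv, hw, rfl, rfl⟩

theorem RubblingReach.add_right (h : RubblingReach G p q) (r : V → ℕ) :
    RubblingReach G (p + r) (q + r) := by
  refine Relation.ReflTransGen.lift (· + r) (fun a b hab => ?_) _ _ h
  obtain ⟨s, v, w, u, hv, hw, rfl, rfl⟩ := rubblingStep_iff.1 hab
  simpa only [add_right_comm _ r] using rubblingStep_of_adj (s + r) hv hw

/-- `q` is obtainable from `p` by rubbling moves and discarding pebbles. Unlike `RubblingReach`,
this is monotone in both distributions, and reaching a vertex is a special case of it. -/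
def Obtainable (G : SimpleGraph V) (p q : V → ℕ) : Prop :=
  ∃ q', RubblingReach G p q' ∧ q ≤ q'

theorem single_le_iff {k : ℕ} : Pi.single u k ≤ p ↔ k ≤ p u := by
  simp [Pi.single, update_le_iff]

theorem kReachable_iff_obtainable {k : ℕ} :
    KReachable G p u k ↔ Obtainable G p (Pi.single u k) := by
  simp only [KReachable, Obtainable, single_le_iff]

theorem solvable_iff_obtainable : Solvable G p ↔ ∀ u, Obtainable G p (Pi.single u 1) :=
  forall_congr' fun _ => kReachable_iff_obtainable

theorem RubblingStep.obtainable (h : RubblingStep G p q) : Obtainable G p q :=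
  ⟨q, .single h, le_rfl⟩

namespace Obtainable

theorem of_le (h : q ≤ p) : Obtainable G p q :=
  ⟨p, .refl, h⟩

theorem add_right (h : Obtainable G p q) (r : V → ℕ) : Obtainable G (p + r) (q + r) := by
  obtain ⟨q', hpq', hq⟩ := h
  exact ⟨q' + r, hpq'.add_right r, add_le_add_left hq r⟩

theorem trans (hpq : Obtainable G p q) (hqr : Obtainable G q r) : Obtainable G p r := by
  obtain ⟨q', hpq', hq⟩ := hpq
  obtain ⟨r', hqr', hr⟩ := hqr
  have hq'r' := hqr'.add_right (q' - q)
  rw [add_tsub_cancel_of_le hq] at hq'r'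
  exact ⟨r' + (q' - q), Relation.ReflTransGen.trans hpq' hq'r', hr.trans le_self_add⟩

theorem mono_left (h : Obtainable G p q) (hp : p ≤ p') : Obtainable G p' q :=
  (of_le hp).trans h

theorem add (h : Obtainable G p q) (h' : Obtainable G p' q') :
    Obtainable G (p + p') (q + q') := by
  refine (h.add_right p').trans ?_
  simpa only [add_comm q] using h'.add_right q

theorem of_adj (hv : G.Adj v u) (hw : G.Adj w u) :
    Obtainable G (Pi.single v 1 + Pi.single w 1) (Pi.single u 1) := by
  simpa using (rubblingStep_of_adj 0 hv hw).obtainable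

theorem map {V' : Type*} [DecidableEq V'] [Finite V] [Finite V'] {G' : SimpleGraph V'}
    (f : G →g G') (h : Obtainable G p q) :
    Obtainable G' (FunOnFinite.linearMap ℕ ℕ f p) (FunOnFinite.linearMap ℕ ℕ f q) := by
  obtain ⟨q', hpq', hq⟩ := h
  refine ⟨FunOnFinite.linearMap ℕ ℕ f q', ?_, ?_⟩
  · refine Relation.ReflTransGen.lift _ (fun a b hab => ?_) _ _ hpq'
    obtain ⟨r, v, w, u, hv, hw, rfl, rfl⟩ := rubblingStep_iff.1 hab
    simpa only [Function.onFun, map_add, FunOnFinite.linearMap_piSingle] using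
      rubblingStep_of_adj (FunOnFinite.linearMap ℕ ℕ f r) (f.map_adj hv) (f.map_adj hw)
  · rw [← add_tsub_cancel_of_le hq, map_add]
    exact le_self_add

theorem sum_mul_le [Fintype V] {W : V → ℕ}
    (hW : ∀ ⦃u v w⦄, G.Adj v u → G.Adj w u → W u ≤ W v + W w) (h : Obtainable G p q) :
    ∑ x, W x * q x ≤ ∑ x, W x * p x := by
  obtain ⟨q', hpq', hq⟩ := h
  refine (Finset.sum_le_sum fun x _ => Nat.mul_le_mul_left _ (hq x)).trans ?_
  clear hq
  induction hpq' with
  | refl => rfl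
  | tail _ hab ih =>
    refine le_trans ?_ ih
    obtain ⟨r, v, w, u, hv, hw, rfl, rfl⟩ := rubblingStep_iff.1 hab
    simpa [mul_add, Finset.sum_add_distrib, Pi.single_apply, add_assoc] using hW hv hw

end Obtainable

end Moves

theorem sum_funOnFinite_linearMap {V V' : Type*} [Fintype V] [Fintype V'] (f : V → V') (p : V → ℕ) :
    ∑ y, FunOnFinite.linearMap ℕ ℕ f p y = ∑ x, p x := by
  classical
  simp only [FunOnFinite.linearMap_apply_apply]
  exact Finset.sum_fiberwise _ _ _

section OptRub

variable {V V₁ V₂ : Type*} [DecidableEq V] [DecidableEq V₁] [DecidableEq V₂]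
  [Fintype V] [Fintype V₁] [Fintype V₂]
  {G : SimpleGraph V} {G₁ : SimpleGraph V₁} {G₂ : SimpleGraph V₂}

theorem optRub_le_sum {p : V → ℕ} (h : ∀ u, Obtainable G p (Pi.single u 1)) :
    optRub G ≤ ∑ v, p v :=
  Nat.sInf_le ⟨p, solvable_iff_obtainable.2 h, rfl⟩

theorem exists_obtainable_sum_eq_optRub (G : SimpleGraph V) :
    ∃ p : V → ℕ, (∀ u, Obtainable G p (Pi.single u 1)) ∧ ∑ v, p v = optRub G := by
  have hne : {m | ∃ p : V → ℕ, Solvable G p ∧ ∑ v, p v = m}.Nonempty :=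
    ⟨_, fun _ => 1, fun u => ⟨_, .refl, le_rfl⟩, rfl⟩
  obtain ⟨p, hp, hsum⟩ := Nat.sInf_mem hne
  exact ⟨p, solvable_iff_obtainable.1 hp, hsum⟩

theorem optRub_le_card_of_two_dominating (S : Finset V)
    (hS : ∀ u ∉ S, ∃ v ∈ S, ∃ w ∈ S, v ≠ w ∧ G.Adj v u ∧ G.Adj w u) : optRub G ≤ S.card := by
  have hsum : ∑ x, (if x ∈ S then 1 else 0) = S.card := by simp
  rw [← hsum]
  refine optRub_le_sum fun u => ?_
  by_cases hu : u ∈ S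
  · exact .of_le (single_le_iff.2 (by simp [hu]))
  · obtain ⟨v, hv, w, hw, hvw, hvu, hwu⟩ := hS u hu
    refine (Obtainable.of_adj hvu hwu).mono_left fun x => ?_
    simp only [Pi.add_apply, Pi.single_apply]
    grind

theorem optRub_le_sum_of_hom (f : G₁ →g G) {p : V₁ → ℕ}
    (hp : ∀ u, Obtainable G₁ p (Pi.single u 1))
    (hf : ∀ u ∉ Set.range f, ∃ v w, G.Adj (f v) u ∧ G.Adj (f w) u ∧
      Obtainable G₁ p (Pi.single v 1 + Pi.single w 1)) : optRub G ≤ ∑ x, p x := by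
  rw [← sum_funOnFinite_linearMap f]
  refine optRub_le_sum fun u => ?_
  by_cases hu : u ∈ Set.range f
  · obtain ⟨v, rfl⟩ := hu
    simpa using (hp v).map f
  · obtain ⟨v, w, hv, hw, hvw⟩ := hf u hu
    exact (by simpa using hvw.map f : Obtainable G _ _).trans (.of_adj hv hw)

theorem optRub_le_add_of_hom (f : G₁ →g G) (g : G₂ →g G)
    (hfg : ∀ u, u ∈ Set.range f ∨ u ∈ Set.range g ∨
      ∃ v w, G.Adj (f v) u ∧ G.Adj (g w) u) :
    optRub G ≤ optRub G₁ + optRub G₂ := by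
  obtain ⟨p, hp, hpsum⟩ := exists_obtainable_sum_eq_optRub G₁
  obtain ⟨q, hq, hqsum⟩ := exists_obtainable_sum_eq_optRub G₂
  have hf (v) : Obtainable G (FunOnFinite.linearMap ℕ ℕ f p) (Pi.single (f v) 1) := by
    simpa using (hp v).map f
  have hg (w) : Obtainable G (FunOnFinite.linearMap ℕ ℕ g q) (Pi.single (g w) 1) := by
    simpa using (hq w).map g
  rw [← hpsum, ← hqsum, ← sum_funOnFinite_linearMap f, ← sum_funOnFinite_linearMap g,
    ← Finset.sum_add_distrib]
  refine optRub_le_sum (p := FunOnFinite.linearMap ℕ ℕ f p + FunOnFinite.linearMap ℕ ℕ g q)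
    fun u => ?_
  rcases hfg u with ⟨v, rfl⟩ | ⟨w, rfl⟩ | ⟨v, w, hv, hw⟩
  · exact (hf v).mono_left le_self_add
  · exact (hg w).mono_left le_add_self
  · exact ((hf v).add (hg w)).trans (.of_adj hv hw)

end OptRub

section Levels

variable {V : Type*} {φ : V → ℕ}

/-- The part of the distribution `p` lying on the levels `0, …, j` of the level function `φ`. -/
def truncate (φ : V → ℕ) (j : ℕ) (p : V → ℕ) : V → ℕ :=
  fun x => if φ x ≤ j then p x else 0

theorem truncate_apply (j : ℕ) (p : V → ℕ) (x : V) :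
    truncate φ j p x = if φ x ≤ j then p x else 0 :=
  rfl

theorem truncate_truncate {i j : ℕ} (h : i ≤ j) (p : V → ℕ) :
    truncate φ i (truncate φ j p) = truncate φ i p := by
  ext x
  grind [truncate_apply]

theorem truncate_add (j : ℕ) (p q : V → ℕ) :
    truncate φ j (p + q) = truncate φ j p + truncate φ j q := by
  ext x
  grind [truncate_apply, Pi.add_apply]

theorem truncate_single [DecidableEq V] (j k : ℕ) (v : V) :
    truncate φ j (Pi.single v k) = if φ v ≤ j then Pi.single v k else 0 := by
  ext x
  by_cases hx : x = v
  · subst hx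
    by_cases hj : φ x ≤ j <;> simp [truncate_apply, hj]
  · by_cases hj : φ v ≤ j <;> simp [truncate_apply, hx, hj]

/-- The weight of a pebble on level `i` when pebbles below level `b` count twice. -/
def levelWeight (b i : ℕ) : ℕ :=
  if i < b then 2 else 1

/-- A lower bound for the loss of total `levelWeight b` in a move placing a pebble on level `i`.
Moves onto level `b - 1` may be free, because they can take both pebbles from level `b`. -/
def levelCost (b i : ℕ) : ℕ :=
  if i + 1 < b then 2 else if i + 1 = b then 0 else 1

theorem levelWeight_add_levelCost_le {G : SimpleGraph V} {u v w : V}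
    (hφ : ∀ ⦃v u⦄, G.Adj v u → φ v ≤ φ u + 1) (b : ℕ) (hv : G.Adj v u) (hw : G.Adj w u) :
    levelWeight b (φ u) + levelCost b (φ u) ≤ levelWeight b (φ v) + levelWeight b (φ w) := by
  have hvu := hφ hv
  have hwu := hφ hw
  simp only [levelWeight, levelCost]
  grind

theorem add_le_levelWeight_add_sum_levelCost {a b : ℕ} (h : b ≤ a) :
    a + b ≤ levelWeight b 0 + ∑ i ∈ Finset.range a, levelCost b i := by
  induction a, h using Nat.le_induction with
  | base =>
    cases b with
    | zero => simp
    | succ b =>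
      have hlow : ∑ i ∈ Finset.range b, levelCost (b + 1) i = ∑ i ∈ Finset.range b, 2 :=
        Finset.sum_congr rfl fun i hi => if_pos (by grind)
      rw [Finset.sum_range_succ, hlow]
      simp only [levelWeight, levelCost, Finset.sum_const, Finset.card_range, smul_eq_mul]
      grind
  | succ a hba ih =>
    have hcost : levelCost b a = 1 := by grind [levelCost]
    rw [Finset.sum_range_succ, hcost]
    lia

theorem sum_levelWeight_mul_truncate [Fintype V] {a b : ℕ} (h : b ≤ a) (p : V → ℕ) :
    ∑ x, levelWeight b (φ x) * truncate φ a p x =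
      ∑ x with φ x ≤ a, p x + ∑ x with φ x < b, p x := by
  rw [Finset.sum_filter, Finset.sum_filter, ← Finset.sum_add_distrib]
  refine Finset.sum_congr rfl fun x _ => ?_
  simp only [levelWeight, truncate]
  grind

theorem sum_filter_add_sum_filter_le_sum [Fintype V] {P Q : V → Prop} [DecidablePred P]
    [DecidablePred Q] (h : ∀ x, P x → ¬ Q x) (p : V → ℕ) :
    ∑ x with P x, p x + ∑ x with Q x, p x ≤ ∑ x, p x := by
  classical
  rw [← Finset.sum_union (Finset.disjoint_filter.2 fun x _ => h x)]
  exact Finset.sum_le_sum_of_subset (Finset.subset_univ _)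

variable [DecidableEq V] {G : SimpleGraph V} {p q r : V → ℕ} {s t u v w : V}

theorem Obtainable.truncate_of_adj (hφ : ∀ ⦃v u⦄, G.Adj v u → φ v ≤ φ u + 1)
    (hv : G.Adj v u) (hw : G.Adj w u) {j : ℕ} (hj : j ≠ φ u) :
    Obtainable G (truncate φ j (r + Pi.single v 1 + Pi.single w 1))
      (truncate φ j (r + Pi.single u 1)) := by
  have hvu := hφ hv
  have hwu := hφ hw
  simp only [truncate_add, truncate_single]
  rcases lt_or_gt_of_ne hj with hju | hju
  · rw [if_neg (by lia : ¬ φ u ≤ j), add_zero, add_assoc]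
    exact .of_le le_self_add
  · rw [if_pos (by lia : φ v ≤ j), if_pos (by lia : φ w ≤ j), if_pos hju.le]
    exact (rubblingStep_of_adj _ hv hw).obtainable

-- `T` collects the levels on which some move of the sequence places its pebble.
theorem RubblingReach.exists_levels [Fintype V] (hφ : ∀ ⦃v u⦄, G.Adj v u → φ v ≤ φ u + 1)
    {W : V → ℕ} {c : ℕ → ℕ}
    (hW : ∀ ⦃u v w⦄, G.Adj v u → G.Adj w u → W u + c (φ u) ≤ W v + W w)
    (h : RubblingReach G p q) :
    ∃ T : Finset ℕ, (∀ j ∉ T, Obtainable G (truncate φ j p) (truncate φ j q)) ∧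
      ∑ x, W x * q x + ∑ j ∈ T, c j ≤ ∑ x, W x * p x := by
  induction h with
  | refl => exact ⟨∅, fun _ _ => .of_le le_rfl, by simp⟩
  | tail _ hstep ih =>
    obtain ⟨T, hT, hsum⟩ := ih
    obtain ⟨r, v, w, u, hv, hw, rfl, rfl⟩ := rubblingStep_iff.1 hstep
    refine ⟨insert (φ u) T, fun j hj => ?_, ?_⟩
    · rw [Finset.mem_insert, not_or] at hj
      exact (hT j hj.2).trans (.truncate_of_adj hφ hv hw hj.1)
    · have hinsert : ∑ j ∈ insert (φ u) T, c j ≤ c (φ u) + ∑ j ∈ T, c j := by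
        by_cases hu : φ u ∈ T
        · simp [hu]
        · rw [Finset.sum_insert hu]
      have hcost := hW hv hw
      simp only [Pi.add_apply, Pi.single_apply, mul_add, Finset.sum_add_distrib, mul_ite, mul_one,
        mul_zero, Finset.sum_ite_eq', Finset.mem_univ, if_true] at hsum ⊢
      lia

-- By minimality of `a`, every level below `a` receives a pebble at some point.
theorem add_le_sum_of_minimal_level [Fintype V] (hφ : ∀ ⦃v u⦄, G.Adj v u → φ v ≤ φ u + 1)
    (ht : φ t = 0) {a b : ℕ} (hba : b ≤ a)
    (ha : Obtainable G (truncate φ a p) (Pi.single t 1))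
    (hmin : ∀ j < a, ¬ Obtainable G (truncate φ j p) (Pi.single t 1)) :
    a + b ≤ ∑ x with φ x ≤ a, p x + ∑ x with φ x < b, p x := by
  obtain ⟨q, hq, htq⟩ := ha
  obtain ⟨T, hT, hsum⟩ := hq.exists_levels hφ fun _ _ _ => levelWeight_add_levelCost_le hφ b
  have hrange : Finset.range a ⊆ T := by
    intro j hj
    by_contra hjT
    rw [Finset.mem_range] at hj
    refine hmin j hj ?_
    have hj' := hT j hjT
    rw [truncate_truncate hj.le] at hj'
    refine hj'.trans (.of_le ?_)
    simpa [single_le_iff, truncate_apply, ht] using htq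
  have hcost := Finset.sum_le_sum_of_subset (f := levelCost b) hrange
  have hweight : levelWeight b 0 ≤ ∑ x, levelWeight b (φ x) * q x := by
    calc levelWeight b 0 ≤ levelWeight b (φ t) * q t := by
          rw [ht]
          exact Nat.le_mul_of_pos_right _ (single_le_iff.1 htq)
      _ ≤ _ := Finset.single_le_sum (f := fun x => levelWeight b (φ x) * q x)
          (fun _ _ => Nat.zero_le _) (Finset.mem_univ t)
  have htotal := add_le_levelWeight_add_sum_levelCost hba
  rw [sum_levelWeight_mul_truncate hba] at hsum
  lia

theorem Obtainable.exists_minimal_level [Finite V] (φ : V → ℕ) (h : Obtainable G p q) :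
    ∃ a, Obtainable G (truncate φ a p) q ∧ ∀ j < a, ¬ Obtainable G (truncate φ j p) q := by
  classical
  have hex : ∃ a, Obtainable G (truncate φ a p) q := by
    obtain ⟨M, hM⟩ := (Set.finite_range φ).bddAbove
    exact ⟨M, h.mono_left fun x => (if_pos (hM ⟨x, rfl⟩)).ge⟩
  exact ⟨Nat.find hex, Nat.find_spec hex, fun _ => Nat.find_min hex⟩

-- Let `a` and `c` be the numbers of levels needed to reach `s` and `t` from their own sides. If the
-- two sets of levels overlap, then the weighted bounds from the two sides add up to twice the size.
theorem Obtainable.add_single_or_le_sum [Fintype V] (hφ : ∀ ⦃v u⦄, G.Adj v u → φ v ≤ φ u + 1)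
    (hs : φ s = 0) (hps : Obtainable G p (Pi.single s 1))
    (hpt : Obtainable G p (Pi.single t 1)) :
    Obtainable G p (Pi.single s 1 + Pi.single t 1) ∨ φ t ≤ ∑ x, p x := by
  set ψ : V → ℕ := fun x => φ t - φ x
  have hψ : ∀ ⦃v u⦄, G.Adj v u → ψ v ≤ ψ u + 1 := fun v u h => by
    have := hφ h.symm
    grind
  have ht : ψ t = 0 := Nat.sub_self _
  obtain ⟨a, ha, hamin⟩ := hps.exists_minimal_level φ
  obtain ⟨c, hc, hcmin⟩ := hpt.exists_minimal_level ψ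
  by_cases hac : a + c < φ t
  · left
    refine (ha.add hc).mono_left fun x => ?_
    simp only [Pi.add_apply, truncate]
    grind
  right
  have hleft := add_le_sum_of_minimal_level hφ hs (b := φ t - c) (by lia) ha hamin
  have hright := add_le_sum_of_minimal_level hψ ht (b := φ t - a) (by lia) hc hcmin
  have hle := sum_filter_add_sum_filter_le_sum (P := fun x => φ x ≤ a)
    (Q := fun x => ψ x < φ t - a) (fun x _ => by lia) p
  have hlt := sum_filter_add_sum_filter_le_sum (P := fun x => ψ x ≤ c)
    (Q := fun x => φ x < φ t - c) (fun x _ => by lia) p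
  lia

theorem Obtainable.two_pow_le_sum [Fintype V] (hφ : ∀ ⦃v u⦄, G.Adj v u → φ v ≤ φ u + 1)
    (ht : φ t = 0) (h : Obtainable G p (Pi.single t 1)) (N : ℕ) :
    2 ^ N ≤ ∑ x, 2 ^ (N - φ x) * p x := by
  have hdouble : ∀ ⦃v u⦄, G.Adj v u → 2 ^ (N - φ u) ≤ 2 * 2 ^ (N - φ v) := fun v u huv => by
    rw [← pow_succ']
    have := hφ huv
    exact Nat.pow_le_pow_right two_pos (by lia)
  have hsum := h.sum_mul_le (W := fun x => 2 ^ (N - φ x)) fun u v w hv hw => by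
    have := hdouble hv
    have := hdouble hw
    lia
  simpa [Pi.single_apply, ht] using hsum

end Levels

section Products

variable {V V₁ V₂ W : Type*} [DecidableEq V] [DecidableEq V₁] [DecidableEq V₂] [DecidableEq W]
  [Fintype V] [Fintype V₁] [Fintype V₂] [Fintype W]
  {G : SimpleGraph V} {G₁ : SimpleGraph V₁} {G₂ : SimpleGraph V₂} (H : SimpleGraph W)

/-- The homomorphism `f □ id` of box products, used to transport distributions columnwise. -/
def boxProdHom {V V' W : Type*} {G : SimpleGraph V} {G' : SimpleGraph V'} (f : G →g G')
    (H : SimpleGraph W) : (G □ H) →g (G' □ H) where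
  toFun := Prod.map f id
  map_rel' h := h.imp (And.imp_left f.map_adj) (And.imp_right (congrArg f))

theorem optRub_boxProd_le_add_of_hom (f : G₁ →g G) (g : G₂ →g G)
    (hfg : ∀ u, u ∈ Set.range f ∨ u ∈ Set.range g ∨
      ∃ v w, G.Adj (f v) u ∧ G.Adj (g w) u) :
    optRub (G □ H) ≤ optRub (G₁ □ H) + optRub (G₂ □ H) := by
  refine optRub_le_add_of_hom (boxProdHom f H) (boxProdHom g H) fun ⟨u, b⟩ => ?_
  rcases hfg u with ⟨v, rfl⟩ | ⟨w, rfl⟩ | ⟨v, w, hv, hw⟩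
  · exact Or.inl ⟨(v, b), rfl⟩
  · exact Or.inr (Or.inl ⟨(w, b), rfl⟩)
  · exact Or.inr (Or.inr ⟨(v, b), (w, b), Or.inl ⟨hv, rfl⟩, Or.inl ⟨hw, rfl⟩⟩)

/-- The embedding `i ↦ c + i` of a path as a segment of a longer path. -/
def pathGraphShift {n m : ℕ} (c : ℕ) (h : c + n ≤ m) : pathGraph n →g pathGraph m where
  toFun i := ⟨c + i, by lia⟩
  map_rel' {i j} hij := by
    simp only [pathGraph_adj] at hij ⊢
    lia

theorem optRub_pathGraph_boxProd_le_add {m n : ℕ} (hm : 0 < m) (hn : 0 < n) :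
    optRub (pathGraph (m + 1 + n) □ H) ≤ optRub (pathGraph m □ H) + optRub (pathGraph n □ H) := by
  refine optRub_boxProd_le_add_of_hom H (pathGraphShift 0 (by lia))
    (pathGraphShift (m + 1) le_rfl) fun ⟨i, hi⟩ => ?_
  rcases lt_trichotomy i m with h | rfl | h
  · exact Or.inl ⟨⟨i, h⟩, Fin.ext (Nat.zero_add i)⟩
  · refine Or.inr (Or.inr ⟨⟨i - 1, by lia⟩, ⟨0, hn⟩, ?_, ?_⟩) <;>
      simp only [pathGraph_adj, pathGraphShift, RelHom.coeFn_mk] <;> lia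
  · exact Or.inr (Or.inl ⟨⟨i - (m + 1), by lia⟩, Fin.ext (Nat.add_sub_of_le h)⟩)

theorem cycleGraph_adj_zero_last (n : ℕ) : (cycleGraph (n + 2)).Adj 0 (Fin.last (n + 1)) := by
  rw [cycleGraph_adj]
  left
  simp

/-- A path as a segment of a cycle. -/
def pathGraphShiftCycle {n m : ℕ} (c : ℕ) (h : c + n ≤ m) : pathGraph n →g cycleGraph m :=
  (Hom.ofLE pathGraph_le_cycleGraph).comp (pathGraphShift c h)

theorem pathGraphShiftCycle_val {n m : ℕ} (c : ℕ) (h : c + n ≤ m) (i : Fin n) :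
    (pathGraphShiftCycle c h i : ℕ) = c + i :=
  rfl

theorem optRub_cycleGraph_boxProd_le_add {m n : ℕ} (hm : 0 < m) (hn : 0 < n) :
    optRub (cycleGraph (m + n + 2) □ H) ≤
      optRub (pathGraph m □ H) + optRub (pathGraph n □ H) := by
  refine optRub_boxProd_le_add_of_hom H (pathGraphShiftCycle 0 (by lia))
    (pathGraphShiftCycle (m + 1) (by lia)) fun ⟨i, hi⟩ => ?_
  obtain h | rfl | h | rfl : i < m ∨ i = m ∨ (m < i ∧ i < m + n + 1) ∨ i = m + n + 1 := by lia
  · exact Or.inl ⟨⟨i, h⟩, Fin.ext (Nat.zero_add i)⟩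
  · refine Or.inr (Or.inr ⟨⟨i - 1, by lia⟩, ⟨0, hn⟩, ?_, ?_⟩) <;>
      refine pathGraph_le_cycleGraph (pathGraph_adj.2 ?_) <;>
      simp only [pathGraphShiftCycle_val] <;> lia
  · exact Or.inr (Or.inl ⟨⟨i - (m + 1), by lia⟩, Fin.ext (Nat.add_sub_of_le h.1)⟩)
  · refine Or.inr (Or.inr ⟨⟨0, hm⟩, ⟨n - 1, by lia⟩, cycleGraph_adj_zero_last (m + n), ?_⟩)
    refine pathGraph_le_cycleGraph (pathGraph_adj.2 ?_)
    simp only [pathGraphShiftCycle_val]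
    lia

theorem optRub_cycleGraph_boxProd_le_or (n : ℕ) :
    optRub (cycleGraph (n + 2) □ H) ≤ optRub (pathGraph (n + 1) □ H) ∨
      n ≤ optRub (pathGraph (n + 1) □ H) := by
  obtain ⟨p, hp, hsum⟩ := exists_obtainable_sum_eq_optRub (pathGraph (n + 1) □ H)
  rw [← hsum, or_iff_not_imp_right]
  intro hlt
  refine optRub_le_sum_of_hom (boxProdHom (pathGraphShiftCycle 0 (by lia)) H) hp fun ⟨i, b⟩ hu => ?_
  obtain rfl : i = Fin.last (n + 1) := by
    by_contra hi
    exact hu ⟨(i.castPred hi, b), Prod.ext (Fin.ext (Nat.zero_add _)) rfl⟩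
  refine ⟨(0, b), (Fin.last n, b), Or.inl ⟨cycleGraph_adj_zero_last n, rfl⟩,
    Or.inl ⟨pathGraph_le_cycleGraph (pathGraph_adj.2 (Or.inl ?_)), rfl⟩, ?_⟩
  · exact congrArg (· + 1) (Nat.zero_add n)
  · refine ((hp _).add_single_or_le_sum (φ := fun x => x.1.val) ?_ rfl (hp _)).resolve_right hlt
    rintro ⟨i, b⟩ ⟨j, c⟩ (⟨h, -⟩ | ⟨-, h⟩)
    · rw [pathGraph_adj] at h
      lia
    · exact h ▸ Nat.le_succ _

end Products

section Ladders

theorem ladder_adj {n : ℕ} {x y : Fin n × Fin 2} : (ladder n).Adj x y ↔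
    (x.1.val + 1 = y.1.val ∨ y.1.val + 1 = x.1.val) ∧ x.2 = y.2 ∨ x.2 ≠ y.2 ∧ x.1 = y.1 := by
  rw [ladder, boxProd_adj, pathGraph_adj, pathGraph_two_eq_top, top_adj]

theorem optRub_ladder_le_max {r : ℕ} (hr : 0 < r) (hr' : r ≤ 3) :
    optRub (ladder r) ≤ max r 2 := by
  interval_cases r
  · exact optRub_le_card_of_two_dominating {(0, 0), (0, 1)} (by simp only [ladder_adj]; decide)
  · exact optRub_le_card_of_two_dominating {(0, 0), (1, 1)} (by simp only [ladder_adj]; decide)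
  · exact optRub_le_card_of_two_dominating {(0, 0), (1, 1), (2, 0)}
      (by simp only [ladder_adj]; decide)

theorem optRub_ladder_three_mul_add_two_le (j : ℕ) : optRub (ladder (3 * j + 2)) ≤ 2 * j + 2 := by
  induction j with
  | zero => exact optRub_ladder_le_max two_pos (by lia)
  | succ j ih =>
    calc optRub (ladder (3 * j + 2 + 1 + 2))
        ≤ optRub (ladder (3 * j + 2)) + optRub (ladder 2) :=
          optRub_pathGraph_boxProd_le_add _ (by lia) two_pos
      _ ≤ 2 * j + 2 + 2 := add_le_add ih (optRub_ladder_le_max two_pos (by lia))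

theorem optRub_ladder_le (j : ℕ) {r : ℕ} (hr : 0 < r) (hr' : r ≤ 3) :
    optRub (ladder (3 * j + 3 + r)) ≤ 2 * j + 2 + max r 2 :=
  (optRub_pathGraph_boxProd_le_add _ (by lia) hr).trans
    (add_le_add (optRub_ladder_three_mul_add_two_le j) (optRub_ladder_le_max hr hr'))

theorem optRub_prism_le (j : ℕ) {r : ℕ} (hr : 0 < r) (hr' : r ≤ 3) :
    optRub (prism (3 * j + 2 + r + 2)) ≤ 2 * j + 2 + max r 2 :=
  (optRub_cycleGraph_boxProd_le_add _ (by lia) hr).trans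
    (add_le_add (optRub_ladder_three_mul_add_two_le j) (optRub_ladder_le_max hr hr'))

-- The linear relaxation of the eight weight inequalities only gives `8 / 3`: integrality matters.
theorem four_le_optRub_ladder_four : 4 ≤ optRub (ladder 4) := by
  obtain ⟨p, hp, hsum⟩ := exists_obtainable_sum_eq_optRub (ladder 4)
  rw [← hsum]
  let dist (t x : Fin 4 × Fin 2) : ℕ :=
    (t.1 - x.1 : ℕ) + (x.1 - t.1 : ℕ) + if t.2 = x.2 then 0 else 1
  have hdist (t : Fin 4 × Fin 2) ⦃x y⦄ (h : (ladder 4).Adj x y) : dist t x ≤ dist t y + 1 := by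
    rw [ladder_adj] at h
    grind
  have hweight (t : Fin 4 × Fin 2) : 2 ^ 4 ≤ ∑ x, 2 ^ (4 - dist t x) * p x :=
    (hp t).two_pow_le_sum (hdist t) (by simp [dist]) 4
  simp only [dist, Fintype.sum_prod_type, Fin.sum_univ_two, Fin.sum_univ_four,
    Prod.forall, Fin.forall_fin_succ, Fin.succ_zero_eq_one, Fin.succ_ne_zero, zero_ne_one,
    ↓reduceIte, Fin.val_succ, Fin.coe_ofNat_eq_mod, Nat.reduceMod] at hweight ⊢
  omega

theorem optRub_prism_le_optRub_ladder {n : ℕ} (hn : 4 ≤ n) :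
    optRub (prism (n + 1)) ≤ optRub (ladder n) := by
  obtain ⟨j, r, hr, hr', rfl⟩ : ∃ j r, 0 < r ∧ r ≤ 3 ∧ n = 3 * j + 2 + r + 1 :=
    ⟨(n - 4) / 3, (n - 4) % 3 + 1, by lia, by lia, by lia⟩
  rcases optRub_cycleGraph_boxProd_le_or (pathGraph 2) (3 * j + 2 + r) with h | h
  · exact h
  refine (optRub_prism_le j hr hr').trans ?_
  by_cases hjr : j = 0 ∧ r = 1
  · obtain ⟨rfl, rfl⟩ := hjr
    exact four_le_optRub_ladder_four
  · exact le_trans (by lia) h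

end Ladders

/-- Upper bounds for the optimal rubbling numbers of prisms via ladders. -/
theorem prism_upper_bounds (k : ℕ) (hk : 2 ≤ k) :
    (optRub (prism (3 * k - 1)) ≤ optRub (ladder (3 * k - 2)) ∧
      optRub (ladder (3 * k - 2)) ≤ 2 * k) ∧
    (optRub (prism (3 * k)) ≤ optRub (ladder (3 * k - 1)) ∧
      optRub (ladder (3 * k - 1)) ≤ 2 * k) ∧
    (optRub (prism (3 * k + 1)) ≤ optRub (ladder (3 * k)) ∧
      optRub (ladder (3 * k)) ≤ 2 * k + 1) := by
  obtain ⟨j, rfl⟩ := Nat.exists_eq_add_of_le' hk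
  exact ⟨⟨optRub_prism_le_optRub_ladder (n := 3 * j + 4) (by lia),
      optRub_ladder_le j (r := 1) (by lia) (by lia)⟩,
    ⟨optRub_prism_le_optRub_ladder (n := 3 * j + 5) (by lia),
      optRub_ladder_le j (r := 2) (by lia) (by lia)⟩,
    ⟨optRub_prism_le_optRub_ladder (n := 3 * j + 6) (by lia),
      optRub_ladder_le j (r := 3) (by lia) (by lia)⟩⟩
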